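/- If a computable sequence of functions f_n : {0,1}^∞ → ℝ converges effectively almost surely (with respect to the uniform Bernoulli measure) to a function f, then there exists a Schnorr test T such that lim_{n→∞} f_n(ω) exists for every infinite sequence ω that passes T. In particular, the limit exists for every Schnorr random sequence. -/

import Mathlib

open MeasureTheory Filter

/-- The cylinder set determined by a finite binary string. -/
def Cyl (x : List Bool) : Set (ℕ → Bool) :=
  {ω | ∀ i : Fin x.length, ω i = x.get i}

/-- The length-`n` prefix of an infinite binary sequence. -/
def Pre (ω : ℕ → Bool) (n : ℕ) : List Bool := (List.range n).map ω

/-- `x` is a prefix of the infinite sequence `ω`. -/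
def PrefixOf (x : List Bool) (ω : ℕ → Bool) : Prop :=
  ∀ i : Fin x.length, ω i = x.get i

/-- `μ` is the uniform Bernoulli measure `B_{1/2}` on Cantor space. -/
def UniformMeasure (μ : Measure (ℕ → Bool)) : Prop :=
  ∀ x : List Bool, μ (Cyl x) = (2 : ENNReal)⁻¹ ^ x.length

/-- A Solovay test: a computable sequence of strings whose weights form a convergent series. -/
def SolovayTest (x : ℕ → List Bool) : Prop :=
  Computable x ∧ Summable (fun n => (2 : ℝ) ^ (-((x n).length : ℤ)))

/-- `ω` passes the Solovay test `x`: only finitely many `x n` are prefixes of `ω`. -/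
def PassesSolovay (x : ℕ → List Bool) (ω : ℕ → Bool) : Prop :=
  {n | PrefixOf (x n) ω}.Finite

/-- A total Solovay test: the series converges with a computable rate of convergence. -/
def TotalSolovayTest (x : ℕ → List Bool) : Prop :=
  SolovayTest x ∧ ∃ m : ℚ → ℕ, Computable m ∧
    ∀ δ : ℚ, 0 < δ → ∑' n : {n : ℕ // m δ ≤ n}, (2 : ℝ) ^ (-((x n.1).length : ℤ)) ≤ (δ : ℝ)

/-- The effectively open set enumerated by the `n`-th row of `f`. -/
def EffOpen (f : ℕ → ℕ → List Bool) (n : ℕ) : Set (ℕ → Bool) := ⋃ i, Cyl (f n i)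

/-- A Martin-Löf test with respect to `μ`. -/
def MLTest (μ : Measure (ℕ → Bool)) (f : ℕ → ℕ → List Bool) : Prop :=
  Computable₂ f ∧ ∀ n, μ (EffOpen f n) ≤ (2 : ENNReal)⁻¹ ^ n

/-- A Schnorr test: a Martin-Löf test whose measures are uniformly computable reals. -/
def SchnorrTest (μ : Measure (ℕ → Bool)) (f : ℕ → ℕ → List Bool) : Prop :=
  MLTest μ f ∧ ∃ g : ℕ → ℚ → ℚ, Computable₂ g ∧
    ∀ (n : ℕ) (ε : ℚ), 0 < ε → |(g n ε : ℝ) - (μ (EffOpen f n)).toReal| ≤ (ε : ℝ)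

/-- Martin-Löf randomness with respect to `μ`. -/
def MLRandom (μ : Measure (ℕ → Bool)) (ω : ℕ → Bool) : Prop :=
  ∀ f, MLTest μ f → ∃ n, ω ∉ EffOpen f n

/-- Schnorr randomness with respect to `μ`. -/
def SchnorrRandom (μ : Measure (ℕ → Bool)) (ω : ℕ → Bool) : Prop :=
  ∀ f, SchnorrTest μ f → ∃ n, ω ∉ EffOpen f n

/-- A monotone machine: a partial computable monotone map on binary strings. -/
def MonotoneMachine (ψ : List Bool →. List Bool) : Prop :=
  Partrec ψ ∧ ∀ p p' y y', y ∈ ψ p → y' ∈ ψ p' → p <+: p' → (y <+: y' ∨ y' <+: y)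

/-- `Km` is the monotone Kolmogorov complexity determined by some optimal monotone machine. -/
def IsKm (Km : List Bool → ℕ) : Prop :=
  ∃ ψ : List Bool →. List Bool, MonotoneMachine ψ ∧
    (∀ x : List Bool, ∃ p y, y ∈ ψ p ∧ x <+: y ∧ p.length = Km x) ∧
    (∀ x p y, y ∈ ψ p → x <+: y → Km x ≤ p.length) ∧
    (∀ ψ' : List Bool →. List Bool, MonotoneMachine ψ' →
      ∃ c : ℕ, ∀ x p y, y ∈ ψ' p → x <+: y → Km x ≤ p.length + c)

/-- A computable real-valued function on Cantor space. -/
def ComputableRealFn (f : (ℕ → Bool) → ℝ) : Prop :=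
  ∃ F : List Bool → ℚ → ℚ, ∃ k : ℚ → ℕ, Computable₂ F ∧ Computable k ∧
    ∀ (ω : ℕ → Bool) (ε : ℚ), 0 < ε → |(F (Pre ω (k ε)) ε : ℝ) - f ω| ≤ (ε : ℝ)

/-- A computable transformation of Cantor space, induced by a monotone machine. -/
def ComputableTrans (T : (ℕ → Bool) → (ℕ → Bool)) : Prop :=
  ∃ ψ : List Bool →. List Bool, MonotoneMachine ψ ∧
    ∀ ω : ℕ → Bool, (∀ n y, y ∈ ψ (Pre ω n) → y = Pre (T ω) y.length) ∧
      (∀ k, ∃ n y, y ∈ ψ (Pre ω n) ∧ k ≤ y.length)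

/-- A computable sequence of real-valued functions on Cantor space. -/
def ComputableRealFnSeq (f : ℕ → (ℕ → Bool) → ℝ) : Prop :=
  ∃ F : ℕ → List Bool → ℚ → ℚ, ∃ k : ℕ → ℚ → ℕ,
    Computable (fun p : ℕ × List Bool × ℚ => F p.1 p.2.1 p.2.2) ∧ Computable₂ k ∧
    ∀ (n : ℕ) (ω : ℕ → Bool) (ε : ℚ), 0 < ε → |(F n (Pre ω (k n ε)) ε : ℝ) - f n ω| ≤ (ε : ℝ)

/-- Effective almost sure convergence of `f n` to `g` with respect to `μ`. -/
def EffConvergesAS (μ : Measure (ℕ → Bool)) (f : ℕ → (ℕ → Bool) → ℝ)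
    (g : (ℕ → Bool) → ℝ) : Prop :=
  ∃ m : ℚ → ℚ → ℕ, Computable₂ m ∧ ∀ δ ε : ℚ, 0 < δ → 0 < ε →
    μ {ω | ∃ n, m δ ε ≤ n ∧ (δ : ℝ) < |f n ω - g ω|} < ENNReal.ofReal (ε : ℝ)

/-!
Replace `f n` by rational approximations of accuracy `2⁻ʲ⁻²` and choose computable times
`N 0 < N 1 < ⋯` such that, off a set of measure at most `2⁻ʲ⁻²`, every `f n` with `n ≥ N j` is
`2⁻ʲ⁻²`-close to the limit. That exceptional set need not have computable measure, but it contains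
the set `V j` where the approximations move by more than `2⁻ʲ` during the block `[N j, N (j + 1)]`.
Membership in `V j` is decided by a finite prefix of `ω`, so `V j` is clopen with a measure
computable uniformly in `j`, and the tail unions of the `V j` form a Schnorr test (effective
Borel–Cantelli). A sequence passing it lies in only finitely many `V j`, so `f n ω` oscillates by at
most a summable amount along the blocks.
-/

section Computability

variable {α β : Type*} [Primcodable α] [Primcodable β]

theorem computablePred_comp {p : β → Prop} {f : α → β} (hp : ComputablePred p)
    (hf : Computable f) : ComputablePred fun a => p (f a) :=
  let ⟨_, hp⟩ := hp
  (hp.comp hf).computablePred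

theorem computablePred_and {p q : α → Prop} (hp : ComputablePred p) (hq : ComputablePred q) :
    ComputablePred fun a => p a ∧ q a := by
  obtain ⟨_, hp⟩ := hp
  obtain ⟨_, hq⟩ := hq
  exact ((Primrec.and.to_comp.comp hp hq).of_eq fun a => by simp).computablePred

theorem computablePred_or {p q : α → Prop} (hp : ComputablePred p) (hq : ComputablePred q) :
    ComputablePred fun a => p a ∨ q a := by
  obtain ⟨_, hp⟩ := hp
  obtain ⟨_, hq⟩ := hq
  exact ((Primrec.or.to_comp.comp hp hq).of_eq fun a => by simp).computablePred

theorem computable_ite {p : α → Prop} [DecidablePred p] {f g : α → β} (hp : ComputablePred p)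
    (hf : Computable f) (hg : Computable g) : Computable fun a => if p a then f a else g a := by
  simpa [Bool.cond_decide] using hp.decide.cond hf hg

theorem computable_sum_range {f : α → ℕ → ℕ} {N : α → ℕ} (hf : Computable₂ f)
    (hN : Computable N) : Computable fun a => ∑ i ∈ Finset.range (N a), f a i := by
  have hstep : Computable₂ fun (a : α) (q : ℕ × ℕ) => q.2 + f a q.1 :=
    Primrec.nat_add.to_comp.comp (Computable.snd.comp Computable.snd)
      (hf.comp Computable.fst (Computable.fst.comp Computable.snd))
  refine (Computable.nat_rec hN (Computable.const 0) hstep).of_eq fun a => ?_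
  induction N a with
  | zero => rfl
  | succ n ih => rw [Finset.sum_range_succ, ← ih]

theorem computable_count {p : α → ℕ → Prop} [∀ a, DecidablePred (p a)] {N : α → ℕ}
    (hp : ComputablePred fun q : α × ℕ => p q.1 q.2) (hN : Computable N) :
    Computable fun a => Nat.count (p a) (N a) := by
  have hind : Computable₂ fun a i => if p a i then 1 else 0 :=
    computable_ite hp (Computable.const 1) (Computable.const 0)
  refine (computable_sum_range hind hN).of_eq fun a => ?_
  rw [Finset.sum_boole, Nat.count_eq_card_filter_range, Nat.cast_id]

theorem computablePred_exists_lt {p : α → ℕ → Prop} {N : α → ℕ}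
    (hp : ComputablePred fun q : α × ℕ => p q.1 q.2) (hN : Computable N) :
    ComputablePred fun a => ∃ n < N a, p a n := by
  classical
  have hzero : ComputablePred fun m : ℕ => m = 0 :=
    (Primrec.eq.comp Primrec.id (Primrec.const 0)).computablePred
  exact (computablePred_comp hzero (computable_count hp hN)).not.of_eq fun a =>
    Nat.count_ne_iff_exists

theorem computable_of_computablePred_graph {β : Type*} [Denumerable β] {f : α → β}
    (hf : ComputablePred fun q : α × β => f q.1 = q.2) : Computable f := by
  classical
  have hex : ∀ a, ∃ n, f a = Denumerable.ofNat β n := fun a => ⟨Encodable.encode (f a), by simp⟩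
  have hP : ComputablePred fun q : α × ℕ => f q.1 = Denumerable.ofNat β q.2 :=
    computablePred_comp hf
      (Computable.fst.pair ((Primrec.ofNat β).to_comp.comp Computable.snd))
  exact ((Primrec.ofNat β).to_comp.comp (Computable.find hP hex)).of_eq fun a =>
    (Nat.find_spec (hex a)).symm

theorem primrec_nat_pow : Primrec₂ fun m n : ℕ => m ^ n :=
  Primrec₂.unpaired'.1 Nat.Primrec.pow

theorem primrec_testBit : Primrec₂ Nat.testBit := by
  have hbit : PrimrecRel fun m n : ℕ => m / 2 ^ n % 2 = 1 :=
    Primrec.eq.comp₂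
      (Primrec.nat_mod.comp₂
        (Primrec.nat_div.comp₂ Primrec₂.left
          (primrec_nat_pow.comp₂ (Primrec₂.const 2) Primrec₂.right))
        (Primrec₂.const 2))
      (Primrec₂.const 1)
  exact hbit.decide.of_eq fun m n => Nat.testBit_eq_decide_div_mod_eq.symm

theorem computablePred_coprime : ComputablePred fun p : ℕ × ℕ => p.1.Coprime p.2 := by
  have hdvd : PrimrecRel fun m n : ℕ => m ∣ n :=
    (Primrec.eq.comp₂ (Primrec.nat_mod.comp₂ Primrec₂.right Primrec₂.left)
      (Primrec₂.const 0)).of_eq fun m n => Nat.dvd_iff_mod_eq_zero.symm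
  have hcommon : PrimrecPred fun q : (ℕ × ℕ) × ℕ => q.2 ∣ q.1.1 ∧ q.2 ∣ q.1.2 ∧ q.2 ≠ 1 :=
    (hdvd.comp Primrec.snd (Primrec.fst.comp Primrec.fst)).and
      ((hdvd.comp Primrec.snd (Primrec.snd.comp Primrec.fst)).and
        (Primrec.eq.comp Primrec.snd (Primrec.const 1)).not)
  have hbound : Primrec fun p : ℕ × ℕ => p.1 + p.2 + 1 :=
    Primrec.succ.comp (Primrec.nat_add.comp Primrec.fst Primrec.snd)
  refine (computablePred_exists_lt (p := fun p d => d ∣ p.1 ∧ d ∣ p.2 ∧ d ≠ 1)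
    hcommon.computablePred hbound.to_comp).not.of_eq ?_
  rintro ⟨m, n⟩
  constructor
  · intro h
    by_contra hmn
    have hgcd : m.gcd n < m + n + 1 := by
      rcases m.eq_zero_or_pos with rfl | hm
      · simp
      · have := Nat.gcd_le_left n hm
        lia
    exact h ⟨m.gcd n, hgcd, Nat.gcd_dvd_left m n, Nat.gcd_dvd_right m n, hmn⟩
  · rintro h ⟨d, -, hm, hn, hd⟩
    exact hd (Nat.eq_one_of_dvd_coprimes h hm hn)

-- `Denumerable.ofEncodableOfInfinite`, from which Mathlib derives `Primcodable ℚ`, numbers the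
-- elements by the rank of their code among all codes.
theorem encode_ofEncodableOfInfinite {α : Type*} [e : Encodable α] [Infinite α]
    [hdec : DecidablePred (· ∈ Set.range e.encode)] (a : α) :
    (Denumerable.ofEncodableOfInfinite α).toEncodable.encode a =
      Nat.count (· ∈ Set.range e.encode) (e.encode a) := by
  obtain rfl : hdec = Encodable.decidableRangeEncode α := Subsingleton.elim _ _
  rfl

theorem computable_encode_ofEncodableOfInfinite {α : Type*} [e : Encodable α] [Infinite α]
    (he : ComputablePred (· ∈ Set.range e.encode)) :
    @Computable α ℕ (@Primcodable.ofDenumerable α (Denumerable.ofEncodableOfInfinite α)) _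
      e.encode := by
  classical
  let := @Primcodable.ofDenumerable α (Denumerable.ofEncodableOfInfinite α)
  refine computable_of_computablePred_graph ?_
  have hrange : ComputablePred fun q : α × ℕ => q.2 ∈ Set.range e.encode :=
    computablePred_comp he Computable.snd
  have hcount : ComputablePred fun q : α × ℕ =>
      (Denumerable.ofEncodableOfInfinite α).toEncodable.encode q.1 =
        Nat.count (· ∈ Set.range e.encode) q.2 :=
    computablePred_comp (PrimrecPred.computablePred (Primrec.eq (α := ℕ)))
      ((Computable.encode.comp Computable.fst).pair
        (computable_count (computablePred_comp he Computable.snd) Computable.snd))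
  refine (computablePred_and hrange hcount).of_eq fun q => ⟨fun ⟨hmem, heq⟩ => ?_, fun h => ?_⟩
  · exact Nat.count_injective ⟨_, rfl⟩ hmem ((encode_ofEncodableOfInfinite _).symm.trans heq)
  · exact ⟨⟨_, h⟩, by rw [encode_ofEncodableOfInfinite, h]⟩

end Computability

section Int

theorem encode_int (z : ℤ) : Encodable.encode z = 2 * z.toNat + (2 * (-z).toNat - 1) := by
  rcases z with n | n
  · change 2 * n = 2 * n + (2 * (-(n : ℤ)).toNat - 1)
    lia
  · change 2 * n + 1 = 2 * (Int.negSucc n).toNat + (2 * (n + 1) - 1)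
    lia

theorem primrec_int_toNat : Primrec Int.toNat := by
  have h : Primrec fun c : ℕ => if c % 2 = 0 then c / 2 else 0 :=
    Primrec.ite
      (Primrec.eq.comp (Primrec.nat_mod.comp Primrec.id (Primrec.const 2)) (Primrec.const 0))
      (Primrec.nat_div.comp Primrec.id (Primrec.const 2)) (Primrec.const 0)
  refine (h.comp Primrec.encode).of_eq fun z => ?_
  rw [encode_int]
  split_ifs <;> lia

theorem primrec_int_sub_natCast : Primrec₂ fun m n : ℕ => (m : ℤ) - n := by
  refine Primrec₂.encode_iff.1 ?_
  have h : Primrec₂ fun m n : ℕ => 2 * (m - n) + (2 * (n - m) - 1) := by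
    have hsub : Primrec₂ fun m n : ℕ => 2 * (m - n) :=
      Primrec.nat_mul.comp₂ (Primrec₂.const 2) Primrec.nat_sub
    exact Primrec.nat_add.comp₂ hsub (Primrec.nat_sub.comp₂ hsub.swap (Primrec₂.const 1))
  refine h.of_eq fun m n => ?_
  rw [encode_int]
  lia

theorem primrec_int_neg : Primrec fun z : ℤ => -z := by
  have h : Primrec fun c : ℕ => if c % 2 = 0 then c - 1 else c + 1 :=
    Primrec.ite
      (Primrec.eq.comp (Primrec.nat_mod.comp Primrec.id (Primrec.const 2)) (Primrec.const 0))
      (Primrec.nat_sub.comp Primrec.id (Primrec.const 1)) Primrec.succ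
  refine Primrec.encode_iff.1 ((h.comp Primrec.encode).of_eq fun z => ?_)
  rw [encode_int, encode_int]
  split_ifs <;> lia

theorem primrec_int_add : Primrec₂ fun a b : ℤ => a + b := by
  have pos : Primrec fun p : ℤ × ℤ => p.1.toNat + p.2.toNat :=
    Primrec.nat_add.comp (primrec_int_toNat.comp Primrec.fst) (primrec_int_toNat.comp Primrec.snd)
  have neg : Primrec fun p : ℤ × ℤ => (-p.1).toNat + (-p.2).toNat :=
    pos.comp ((primrec_int_neg.comp Primrec.fst).pair (primrec_int_neg.comp Primrec.snd))
  refine (primrec_int_sub_natCast.comp pos neg).of_eq fun p => ?_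
  lia

theorem primrec_int_sub : Primrec₂ fun a b : ℤ => a - b :=
  primrec_int_add.comp Primrec.fst (primrec_int_neg.comp Primrec.snd)

theorem primrec_int_natAbs : Primrec Int.natAbs :=
  (Primrec.nat_add.comp primrec_int_toNat (primrec_int_toNat.comp primrec_int_neg)).of_eq
    fun z => by lia

theorem primrec_int_mul_natCast : Primrec₂ fun (a : ℤ) (n : ℕ) => a * n := by
  refine (primrec_int_sub_natCast.comp
    (Primrec.nat_mul.comp (primrec_int_toNat.comp Primrec.fst) Primrec.snd)
    (Primrec.nat_mul.comp (primrec_int_toNat.comp (primrec_int_neg.comp Primrec.fst))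
      Primrec.snd)).of_eq fun p => ?_
  rw [Nat.cast_mul, Nat.cast_mul, ← sub_mul, Int.toNat_sub_toNat_neg]

theorem primrecRel_int_lt : PrimrecRel fun a b : ℤ => a < b :=
  (Primrec.nat_lt.comp (Primrec.const 0)
    (primrec_int_toNat.comp (primrec_int_sub.comp Primrec.snd Primrec.fst))).of_eq fun p => by lia

end Int

section Rat

-- `Rat.instEncodable` is not the encoding by which `ℚ` is `Primcodable`.
theorem encode_rat (q : ℚ) :
    Rat.instEncodable.encode q = Nat.pair (Encodable.encode q.num) q.den :=
  rfl

theorem mem_range_encode_rat_iff (n : ℕ) : n ∈ Set.range Rat.instEncodable.encode ↔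
    n.unpair.2 ≠ 0 ∧ (Denumerable.ofNat ℤ n.unpair.1).natAbs.Coprime n.unpair.2 := by
  constructor
  · rintro ⟨q, rfl⟩
    rw [encode_rat, Nat.unpair_pair, Denumerable.ofNat_encode]
    exact ⟨q.den_nz, q.reduced⟩
  · rintro ⟨hden, hcop⟩
    refine ⟨⟨Denumerable.ofNat ℤ n.unpair.1, n.unpair.2, hden, hcop⟩, ?_⟩
    rw [encode_rat, Denumerable.encode_ofNat, Nat.pair_unpair]

theorem computable_encode_rat : Computable Rat.instEncodable.encode := by
  refine computable_encode_ofEncodableOfInfinite ?_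
  have hden : PrimrecPred fun n : ℕ => n.unpair.2 ≠ 0 :=
    (Primrec.eq.comp (Primrec.snd.comp Primrec.unpair) (Primrec.const 0)).not
  have hnum : Primrec fun n : ℕ => (Denumerable.ofNat ℤ n.unpair.1).natAbs :=
    primrec_int_natAbs.comp ((Primrec.ofNat ℤ).comp (Primrec.fst.comp Primrec.unpair))
  have hcop : ComputablePred fun n : ℕ =>
      (Denumerable.ofNat ℤ n.unpair.1).natAbs.Coprime n.unpair.2 :=
    computablePred_comp computablePred_coprime
      (hnum.pair (Primrec.snd.comp Primrec.unpair)).to_comp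
  exact (computablePred_and hden.computablePred hcop).of_eq fun n =>
    (mem_range_encode_rat_iff n).symm

theorem computable_rat_num : Computable Rat.num := by
  have h : Computable fun q : ℚ => (Rat.instEncodable.encode q).unpair.1 :=
    Computable.fst.comp (Primrec.unpair.to_comp.comp computable_encode_rat)
  refine ((Primrec.ofNat ℤ).to_comp.comp h).of_eq fun q => ?_
  rw [encode_rat, Nat.unpair_pair, Denumerable.ofNat_encode]

theorem computable_rat_den : Computable Rat.den := by
  have h : Computable fun q : ℚ => (Rat.instEncodable.encode q).unpair.2 :=
    Computable.snd.comp (Primrec.unpair.to_comp.comp computable_encode_rat)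
  refine h.of_eq fun q => ?_
  rw [encode_rat, Nat.unpair_pair]

theorem mkRat_eq_iff_mul_eq_mul {z : ℤ} {d : ℕ} (q : ℚ) :
    mkRat z d = q ↔ (d = 0 ∧ q = 0) ∨ (d ≠ 0 ∧ z * q.den = q.num * d) := by
  rcases eq_or_ne d 0 with rfl | hd
  · simp [eq_comm]
  · conv_lhs => rw [← q.mkRat_self, Rat.mkRat_eq_iff hd q.den_nz]
    simp [hd]

theorem computable_mkRat : Computable₂ mkRat := by
  refine computable_of_computablePred_graph ?_
  have num : Computable fun p : (ℤ × ℕ) × ℚ => p.2.num := computable_rat_num.comp Computable.snd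
  have den : Computable fun p : (ℤ × ℕ) × ℚ => p.2.den := computable_rat_den.comp Computable.snd
  have d : Computable fun p : (ℤ × ℕ) × ℚ => p.1.2 := Computable.snd.comp Computable.fst
  have d_eq_zero : ComputablePred fun p : (ℤ × ℕ) × ℚ => p.1.2 = 0 :=
    computablePred_comp (PrimrecPred.computablePred (Primrec.eq (α := ℕ)))
      (d.pair (Computable.const 0))
  have q_eq_zero : ComputablePred fun p : (ℤ × ℕ) × ℚ => p.2 = 0 :=
    computablePred_comp (PrimrecPred.computablePred (Primrec.eq (α := ℚ)))
      (Computable.snd.pair (Computable.const 0))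
  have cross : ComputablePred fun p : (ℤ × ℕ) × ℚ => p.1.1 * p.2.den = p.2.num * p.1.2 :=
    computablePred_comp (PrimrecPred.computablePred (Primrec.eq (α := ℤ)))
      ((primrec_int_mul_natCast.to_comp.comp (Computable.fst.comp Computable.fst) den).pair
        (primrec_int_mul_natCast.to_comp.comp num d))
  exact (computablePred_or (computablePred_and d_eq_zero q_eq_zero)
    (computablePred_and d_eq_zero.not cross)).of_eq fun p => (mkRat_eq_iff_mul_eq_mul p.2).symm

theorem computable_rat_sub : Computable₂ fun a b : ℚ => a - b := by
  have num₁ : Computable fun p : ℚ × ℚ => p.1.num := computable_rat_num.comp Computable.fst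
  have num₂ : Computable fun p : ℚ × ℚ => p.2.num := computable_rat_num.comp Computable.snd
  have den₁ : Computable fun p : ℚ × ℚ => p.1.den := computable_rat_den.comp Computable.fst
  have den₂ : Computable fun p : ℚ × ℚ => p.2.den := computable_rat_den.comp Computable.snd
  have num : Computable fun p : ℚ × ℚ => p.1.num * p.2.den - p.2.num * p.1.den :=
    primrec_int_sub.to_comp.comp (primrec_int_mul_natCast.to_comp.comp num₁ den₂)
      (primrec_int_mul_natCast.to_comp.comp num₂ den₁)
  have den : Computable fun p : ℚ × ℚ => p.1.den * p.2.den :=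
    Primrec.nat_mul.to_comp.comp den₁ den₂
  exact (computable_mkRat.comp num den).of_eq fun p => (Rat.sub_def' p.1 p.2).symm

theorem computablePred_rat_lt : ComputablePred fun p : ℚ × ℚ => p.1 < p.2 := by
  have hcross : Computable fun p : ℚ × ℚ => (p.1.num * p.2.den, p.2.num * p.1.den) :=
    (primrec_int_mul_natCast.to_comp.comp (computable_rat_num.comp Computable.fst)
      (computable_rat_den.comp Computable.snd)).pair
      (primrec_int_mul_natCast.to_comp.comp (computable_rat_num.comp Computable.snd)
      (computable_rat_den.comp Computable.fst))
  exact (computablePred_comp (PrimrecPred.computablePred primrecRel_int_lt) hcross).of_eq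
    fun p => (Rat.lt_iff p.1 p.2).symm

theorem computablePred_rat_lt_abs_sub :
    ComputablePred fun p : ℚ × ℚ × ℚ => p.1 < |p.2.1 - p.2.2| := by
  have a : Computable fun p : ℚ × ℚ × ℚ => p.2.1 := Computable.fst.comp Computable.snd
  have b : Computable fun p : ℚ × ℚ × ℚ => p.2.2 := Computable.snd.comp Computable.snd
  have hsub := computablePred_comp computablePred_rat_lt
    (Computable.fst.pair (computable_rat_sub.comp a b))
  have hsub' := computablePred_comp computablePred_rat_lt
    (Computable.fst.pair (computable_rat_sub.comp b a))
  exact (computablePred_or hsub hsub').of_eq fun p => by rw [lt_abs, neg_sub]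

theorem computable_rat_natCast_div_natCast : Computable₂ fun m n : ℕ => (m : ℚ) / n := by
  have hcast : Primrec fun m : ℕ => (m : ℤ) :=
    (primrec_int_sub_natCast.comp Primrec.id (Primrec.const 0)).of_eq fun m => by simp
  refine (computable_mkRat.comp (hcast.to_comp.comp Computable.fst) Computable.snd).of_eq
    fun p => ?_
  rw [Rat.mkRat_eq_div, Int.cast_natCast]

theorem computable_rat_inv_two_pow : Computable fun j : ℕ => (2 : ℚ)⁻¹ ^ j := by
  refine (computable_rat_natCast_div_natCast.comp (Computable.const 1)
    (primrec_nat_pow.comp (Primrec.const 2) Primrec.id).to_comp).of_eq fun j => ?_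
  rw [Nat.cast_pow, Nat.cast_one, Nat.cast_ofNat, one_div, inv_pow, id]

end Rat

section CantorSpace

theorem length_Pre (ω : ℕ → Bool) (n : ℕ) : (Pre ω n).length = n := by
  rw [Pre, List.length_map, List.length_range]

theorem mem_Cyl_iff {x : List Bool} {ω : ℕ → Bool} : ω ∈ Cyl x ↔ Pre ω x.length = x := by
  refine ⟨fun h => List.ext_getElem (length_Pre ω _) fun i _ hi => ?_, fun h i => ?_⟩
  · simpa [Pre] using h ⟨i, hi⟩
  · have hi := i.isLt
    simp only [List.get_eq_getElem]
    conv_rhs => rw [List.getElem_of_eq h.symm hi]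
    simp [Pre]

theorem mem_Cyl_Pre_iff {ω ω' : ℕ → Bool} {n : ℕ} : ω' ∈ Cyl (Pre ω n) ↔ Pre ω' n = Pre ω n := by
  rw [mem_Cyl_iff, length_Pre]

theorem measurableSet_Cyl (x : List Bool) : MeasurableSet (Cyl x) := by
  rw [Cyl, Set.ofPred_forall]
  exact MeasurableSet.iInter fun i =>
    measurableSet_eq_fun (measurable_pi_apply _) measurable_const

theorem take_Pre {m n : ℕ} (h : m ≤ n) (ω : ℕ → Bool) : (Pre ω n).take m = Pre ω m := by
  rw [Pre, ← List.map_take, List.take_range, min_eq_left h, Pre]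

theorem Pre_eq_Pre_iff {ω ω' : ℕ → Bool} {n : ℕ} : Pre ω n = Pre ω' n ↔ ∀ i < n, ω i = ω' i := by
  simp [Pre]

theorem exists_Pre_testBit_eq (ω : ℕ → Bool) (n : ℕ) :
    ∃ s < 2 ^ n, Pre (Nat.testBit s) n = Pre ω n :=
  ⟨Nat.ofBits fun i : Fin n => ω i, Nat.ofBits_lt_two_pow _,
    Pre_eq_Pre_iff.2 fun i hi => Nat.testBit_ofBits_lt _ i hi⟩

theorem injOn_Pre_testBit (n : ℕ) : Set.InjOn (fun s => Pre (Nat.testBit s) n) {s | s < 2 ^ n} := by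
  intro s hs t ht hst
  refine Nat.eq_of_testBit_eq fun i => ?_
  rcases lt_or_ge i n with hi | hi
  · exact Pre_eq_Pre_iff.1 hst i hi
  · have hpow : 2 ^ n ≤ 2 ^ i := Nat.pow_le_pow_right two_pos hi
    rw [Nat.testBit_lt_two_pow (lt_of_lt_of_le hs hpow),
      Nat.testBit_lt_two_pow (lt_of_lt_of_le ht hpow)]

theorem primrec_Pre_testBit : Primrec₂ fun s n : ℕ => Pre (Nat.testBit s) n :=
  Primrec.list_map (Primrec.list_range.comp Primrec.snd)
    (primrec_testBit.comp (Primrec.fst.comp Primrec.fst) Primrec.snd)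

theorem setOf_Pre_eq_biUnion_Cyl (P : List Bool → Prop) [DecidablePred P] (n : ℕ) :
    {ω | P (Pre ω n)} = ⋃ s ∈ (Finset.range (2 ^ n)).filter fun s => P (Pre (Nat.testBit s) n),
      Cyl (Pre (Nat.testBit s) n) := by
  ext ω
  simp only [Set.mem_ofPred_eq, Set.mem_iUnion, Finset.mem_filter, Finset.mem_range, exists_prop,
    mem_Cyl_Pre_iff]
  constructor
  · intro h
    obtain ⟨s, hs, hsω⟩ := exists_Pre_testBit_eq ω n
    exact ⟨s, ⟨hs, hsω ▸ h⟩, hsω.symm⟩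
  · rintro ⟨s, ⟨-, hs⟩, hsω⟩
    exact hsω ▸ hs

theorem UniformMeasure.measureReal_setOf_Pre {μ : Measure (ℕ → Bool)} (hμ : UniformMeasure μ)
    (P : List Bool → Prop) [DecidablePred P] (n : ℕ) :
    μ.real {ω | P (Pre ω n)} =
      (Nat.count (fun s => P (Pre (Nat.testBit s) n)) (2 ^ n) : ℝ) / (2 ^ n : ℕ) := by
  have hdisj : Set.PairwiseDisjoint
      ((Finset.range (2 ^ n)).filter fun s => P (Pre (Nat.testBit s) n) : Finset ℕ)
      fun s => Cyl (Pre (Nat.testBit s) n) := by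
    intro s hs t ht hst
    refine Set.disjoint_left.2 fun ω hωs hωt => hst ?_
    rw [mem_Cyl_Pre_iff] at hωs hωt
    simp only [Finset.coe_filter, Finset.mem_range, Set.mem_ofPred_eq] at hs ht
    exact injOn_Pre_testBit n hs.1 ht.1 (hωs.symm.trans hωt)
  rw [measureReal_def, setOf_Pre_eq_biUnion_Cyl,
    measure_biUnion_finset hdisj fun s _ => measurableSet_Cyl _]
  simp [hμ _, length_Pre, Nat.count_eq_card_filter_range, div_eq_mul_inv]

end CantorSpace

section UniformlyClopen

variable {α β γ : Type*} [Primcodable α] [Primcodable β] [Primcodable γ]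

/-- A family of functions on Cantor space is prefix-computable if the value `h a ω` is computed,
uniformly in `a`, from a prefix of `ω` whose length is a computable function of `a` alone. -/
def PrefixComputable (h : α → (ℕ → Bool) → β) : Prop :=
  ∃ (L : α → ℕ) (Φ : α → List Bool → β), Computable L ∧ Computable₂ Φ ∧
    ∀ a ω, h a ω = Φ a (Pre ω (L a))

/-- A family of subsets of Cantor space is uniformly clopen if membership in `V a` is decided,
uniformly in `a`, by a prefix whose length is a computable function of `a`. -/
def UniformlyClopen (V : α → Set (ℕ → Bool)) : Prop :=
  ∃ (L : α → ℕ) (P : α → List Bool → Prop), Computable L ∧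
    (ComputablePred fun q : α × List Bool => P q.1 q.2) ∧ ∀ a ω, ω ∈ V a ↔ P a (Pre ω (L a))

theorem computable_pair_take {L : α → ℕ} (hL : Computable L) :
    Computable fun q : α × List β => (q.1, q.2.take (L q.1)) :=
  Computable.fst.pair (Primrec.list_take.to_comp.comp (hL.comp Computable.fst) Computable.snd)

theorem PrefixComputable.comp {h : β → (ℕ → Bool) → γ} (hh : PrefixComputable h) {φ : α → β}
    (hφ : Computable φ) : PrefixComputable fun a => h (φ a) := by
  obtain ⟨L, Φ, hL, hΦ, hLΦ⟩ := hh
  exact ⟨fun a => L (φ a), fun a => Φ (φ a), hL.comp hφ,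
    hΦ.comp (hφ.comp Computable.fst) Computable.snd, fun a => hLΦ (φ a)⟩

theorem PrefixComputable.uniformlyClopen_setOf {h₁ : α → (ℕ → Bool) → β} {h₂ : α → (ℕ → Bool) → γ}
    (hh₁ : PrefixComputable h₁) (hh₂ : PrefixComputable h₂) {R : α → β × γ → Prop}
    (hR : ComputablePred fun q : α × β × γ => R q.1 q.2) :
    UniformlyClopen fun a => {ω | R a (h₁ a ω, h₂ a ω)} := by
  obtain ⟨L₁, Φ₁, hL₁, hΦ₁, hLΦ₁⟩ := hh₁
  obtain ⟨L₂, Φ₂, hL₂, hΦ₂, hLΦ₂⟩ := hh₂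
  refine ⟨fun a => L₁ a + L₂ a, fun a w => R a (Φ₁ a (w.take (L₁ a)), Φ₂ a (w.take (L₂ a))),
    Primrec.nat_add.to_comp.comp hL₁ hL₂, ?_, fun a ω => ?_⟩
  · exact computablePred_comp hR (Computable.fst.pair
      ((Computable.comp hΦ₁ (computable_pair_take hL₁)).pair
        (Computable.comp hΦ₂ (computable_pair_take hL₂))))
  · beta_reduce
    rw [take_Pre (Nat.le_add_right _ _), take_Pre (Nat.le_add_left _ _), ← hLΦ₁, ← hLΦ₂,
      Set.mem_ofPred_eq]

namespace UniformlyClopen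

theorem comp {V : β → Set (ℕ → Bool)} (hV : UniformlyClopen V) {φ : α → β}
    (hφ : Computable φ) : UniformlyClopen fun a => V (φ a) := by
  obtain ⟨L, P, hL, hP, hLP⟩ := hV
  exact ⟨fun a => L (φ a), fun a => P (φ a), hL.comp hφ,
    computablePred_comp hP ((hφ.comp Computable.fst).pair Computable.snd), fun a => hLP (φ a)⟩

theorem iUnion_lt {V : α × ℕ → Set (ℕ → Bool)} (hV : UniformlyClopen V) {N : α → ℕ}
    (hN : Computable N) : UniformlyClopen fun a => ⋃ n < N a, V (a, n) := by
  obtain ⟨L, P, hL, hP, hLP⟩ := hV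
  refine ⟨fun a => ∑ n ∈ Finset.range (N a), L (a, n),
    fun a w => ∃ n < N a, P (a, n) (w.take (L (a, n))), computable_sum_range hL hN, ?_,
    fun a ω => ?_⟩
  · have hindex : Computable fun q : (α × List Bool) × ℕ => ((q.1.1, q.2), q.1.2) :=
      ((Computable.fst.comp Computable.fst).pair Computable.snd).pair
        (Computable.snd.comp Computable.fst)
    exact computablePred_exists_lt
      (p := fun (q : α × List Bool) n => P (q.1, n) (q.2.take (L (q.1, n))))
      (computablePred_comp hP ((computable_pair_take hL).comp hindex)) (hN.comp Computable.fst)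
  · have hL_le {n : ℕ} (hn : n < N a) : L (a, n) ≤ ∑ n ∈ Finset.range (N a), L (a, n) :=
      Finset.single_le_sum (f := fun n => L (a, n)) (fun _ _ => Nat.zero_le _)
        (Finset.mem_range.2 hn)
    simp only [Set.mem_iUnion, exists_prop, hLP]
    exact exists_congr fun n => and_congr_right fun hn => by rw [take_Pre (hL_le hn)]

theorem union {V W : α → Set (ℕ → Bool)} (hV : UniformlyClopen V) (hW : UniformlyClopen W) :
    UniformlyClopen fun a => V a ∪ W a := by
  obtain ⟨L, P, hL, hP, hLP⟩ := hV
  obtain ⟨M, Q, hM, hQ, hMQ⟩ := hW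
  refine ⟨fun a => L a + M a, fun a w => P a (w.take (L a)) ∨ Q a (w.take (M a)),
    Primrec.nat_add.to_comp.comp hL hM, ?_, fun a ω => ?_⟩
  · exact computablePred_or (computablePred_comp hP (computable_pair_take hL))
      (computablePred_comp hQ (computable_pair_take hM))
  · beta_reduce
    rw [take_Pre (Nat.le_add_right _ _), take_Pre (Nat.le_add_left _ _), ← hLP, ← hMQ,
      Set.mem_union]

theorem exists_computable_measureReal {V : α → Set (ℕ → Bool)} (hV : UniformlyClopen V)
    {μ : Measure (ℕ → Bool)} (hμ : UniformMeasure μ) :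
    ∃ c : α → ℚ, Computable c ∧ ∀ a, (c a : ℝ) = μ.real (V a) := by
  classical
  obtain ⟨L, P, hL, hP, hLP⟩ := hV
  have hpow : Computable fun a => 2 ^ L a := primrec_nat_pow.to_comp.comp (Computable.const 2) hL
  have hword : ComputablePred fun q : α × ℕ => P q.1 (Pre (Nat.testBit q.2) (L q.1)) :=
    computablePred_comp hP (Computable.fst.pair
      (primrec_Pre_testBit.to_comp.comp Computable.snd (hL.comp Computable.fst)))
  refine ⟨fun a =>
    (Nat.count (fun s => P a (Pre (Nat.testBit s) (L a))) (2 ^ L a) : ℚ) / (2 ^ L a : ℕ),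
    computable_rat_natCast_div_natCast.comp (computable_count hword hpow) hpow, fun a => ?_⟩
  have hVa : V a = {ω | P a (Pre ω (L a))} := Set.ext (hLP a)
  rw [hVa, hμ.measureReal_setOf_Pre, Rat.cast_div, Rat.cast_natCast, Rat.cast_natCast]

theorem exists_iUnion_Cyl_eq {V : α → Set (ℕ → Bool)} (hV : UniformlyClopen V) {x : α → List Bool}
    (hx : Computable x) (hxV : ∀ a, Cyl (x a) ⊆ V a) :
    ∃ s : α → ℕ → List Bool, Computable₂ s ∧ ∀ a, ⋃ n, Cyl (s a n) = V a := by
  classical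
  obtain ⟨L, P, hL, hP, hLP⟩ := hV
  have hword : Computable fun q : α × ℕ => Pre (Nat.testBit q.2) (L q.1) :=
    primrec_Pre_testBit.to_comp.comp Computable.snd (hL.comp Computable.fst)
  refine ⟨fun a n => if P a (Pre (Nat.testBit n) (L a)) then Pre (Nat.testBit n) (L a) else x a,
    computable_ite (computablePred_comp hP (Computable.fst.pair hword)) hword
      (hx.comp Computable.fst), fun a => subset_antisymm (Set.iUnion_subset fun n => ?_) ?_⟩
  · beta_reduce
    split_ifs with h
    · intro ω hω
      rw [hLP, mem_Cyl_Pre_iff.1 hω]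
      exact h
    · exact hxV a
  · intro ω hω
    obtain ⟨n, -, hn⟩ := exists_Pre_testBit_eq ω (L a)
    rw [hLP, ← hn] at hω
    refine Set.mem_iUnion.2 ⟨n, ?_⟩
    beta_reduce
    rw [if_pos hω]
    exact mem_Cyl_Pre_iff.2 hn.symm

end UniformlyClopen

theorem uniformlyClopen_Cyl {x : α → List Bool} (hx : Computable x) :
    UniformlyClopen fun a => Cyl (x a) :=
  ⟨fun a => (x a).length, fun a w => w = x a, Computable.list_length.comp hx,
    computablePred_comp (PrimrecPred.computablePred (Primrec.eq (α := List Bool)))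
      (Computable.snd.pair (hx.comp Computable.fst)), fun _ _ => mem_Cyl_iff⟩

end UniformlyClopen

section SchnorrTests

theorem measure_iUnion_le_inv_two_pow {Ω : Type*} [MeasurableSpace Ω] {μ : Measure Ω}
    {W : ℕ → Set Ω} {n : ℕ} (hW : ∀ j, μ (W j) ≤ (2 : ENNReal)⁻¹ ^ (n + j + 1)) :
    μ (⋃ j, W j) ≤ (2 : ENNReal)⁻¹ ^ n :=
  calc μ (⋃ j, W j) ≤ ∑' j, μ (W j) := measure_iUnion_le W
    _ ≤ ∑' j, (2 : ENNReal)⁻¹ ^ n * (2 : ENNReal)⁻¹ ^ (j + 1) :=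
        ENNReal.tsum_le_tsum fun j => by rw [← pow_add, ← add_assoc]; exact hW j
    _ = (2 : ENNReal)⁻¹ ^ n := by
        rw [ENNReal.tsum_mul_left, ENNReal.tsum_geometric_add_one, ENNReal.one_sub_inv_two,
          inv_inv, ENNReal.inv_mul_cancel two_ne_zero ENNReal.ofNat_ne_top, mul_one]

theorem abs_measureReal_iUnion_lt_sub_le {Ω : Type*} [MeasurableSpace Ω] {μ : Measure Ω}
    [IsFiniteMeasure μ] {W : ℕ → Set Ω} (hW : ∀ j, μ (W j) ≤ (2 : ENNReal)⁻¹ ^ (j + 1)) (J : ℕ) :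
    |μ.real (⋃ j < J, W j) - μ.real (⋃ j, W j)| ≤ (2 : ℝ)⁻¹ ^ J := by
  have htail : μ.real (⋃ j, W (J + j)) ≤ (2 : ℝ)⁻¹ ^ J := by
    have h := ENNReal.toReal_mono (by finiteness)
      (measure_iUnion_le_inv_two_pow (W := fun j => W (J + j)) fun j => hW (J + j))
    simpa [measureReal_def] using h
  have hcover : ⋃ j, W j ⊆ (⋃ j < J, W j) ∪ ⋃ j, W (J + j) := by
    refine Set.iUnion_subset fun j => ?_
    rcases lt_or_ge j J with hj | hj
    · exact Set.subset_union_of_subset_left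
        (Set.subset_iUnion₂ (s := fun j (_ : j < J) => W j) j hj) _
    · rw [← Nat.add_sub_of_le hj]
      exact Set.subset_union_of_subset_right
        (Set.subset_iUnion (fun k => W (J + k)) (j - J)) _
  have hle : μ.real (⋃ j < J, W j) ≤ μ.real (⋃ j, W j) :=
    measureReal_mono (Set.iUnion₂_subset fun j _ => Set.subset_iUnion W j)
  have hge : μ.real (⋃ j, W j) ≤ μ.real (⋃ j < J, W j) + μ.real (⋃ j, W (J + j)) :=
    (measureReal_mono hcover).trans (measureReal_union_le _ _)
  rw [abs_sub_comm, abs_of_nonneg (sub_nonneg.2 hle)]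
  linarith

theorem inv_two_pow_den_le {ε : ℚ} (hε : 0 < ε) : (2 : ℝ)⁻¹ ^ ε.den ≤ ε := by
  have hnum : (1 : ℝ) ≤ ε.num := by exact_mod_cast Rat.num_pos.2 hε
  have hpow : (ε.den : ℝ) ≤ 2 ^ ε.den := by exact_mod_cast Nat.lt_two_pow_self.le
  calc (2 : ℝ)⁻¹ ^ ε.den = 1 / 2 ^ ε.den := by rw [inv_pow, one_div]
    _ ≤ ε.num / ε.den := div_le_div₀ (by positivity) hnum (by positivity) hpow
    _ = ε := by rw [Rat.cast_def]

theorem exists_schnorrTest_effOpen_eq_iUnion {μ : Measure (ℕ → Bool)} [IsFiniteMeasure μ]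
    (hμ : UniformMeasure μ) {W : ℕ × ℕ → Set (ℕ → Bool)} (hW : UniformlyClopen W)
    {x : ℕ × ℕ → List Bool} (hx : Computable x) (hxW : ∀ p, Cyl (x p) ⊆ W p)
    (hμW : ∀ i j, μ (W (i, j)) ≤ (2 : ENNReal)⁻¹ ^ (i + j + 1)) :
    ∃ t, SchnorrTest μ t ∧ ∀ i, EffOpen t i = ⋃ j, W (i, j) := by
  obtain ⟨s, hs, hsW⟩ := hW.exists_iUnion_Cyl_eq hx hxW
  have hpartial : UniformlyClopen fun p : ℕ × ℕ => ⋃ j < p.2, W (p.1, j) :=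
    (hW.comp (Computable.pair (Computable.fst.comp Computable.fst) Computable.snd)).iUnion_lt
      Computable.snd
  obtain ⟨c, hc, hcW⟩ := hpartial.exists_computable_measureReal hμ
  have ht : Computable₂ fun i n : ℕ => s (i, n.unpair.1) n.unpair.2 :=
    have hunpair : Computable fun p : ℕ × ℕ => p.2.unpair :=
      Primrec.unpair.to_comp.comp Computable.snd
    hs.comp (Computable.fst.pair (Computable.fst.comp hunpair)) (Computable.snd.comp hunpair)
  have htW (i : ℕ) : EffOpen (fun i n => s (i, n.unpair.1) n.unpair.2) i = ⋃ j, W (i, j) := by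
    simp only [EffOpen, ← hsW]
    exact Set.iUnion_unpair fun j n => Cyl (s (i, j) n)
  refine ⟨fun i n => s (i, n.unpair.1) n.unpair.2,
    ⟨⟨ht, fun i => htW i ▸ measure_iUnion_le_inv_two_pow (hμW i)⟩, fun i ε => c (i, ε.den),
      hc.comp (Computable.fst.pair (computable_rat_den.comp Computable.snd)),
      fun i ε hε => ?_⟩, htW⟩
  have hμWi (j : ℕ) : μ (W (i, j)) ≤ (2 : ENNReal)⁻¹ ^ (j + 1) :=
    (hμW i j).trans (pow_le_pow_right_of_le_one' (by simp) (by lia))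
  rw [hcW, htW, ← measureReal_def]
  exact (abs_measureReal_iUnion_lt_sub_le hμWi ε.den).trans (inv_two_pow_den_le hε)

theorem exists_schnorrTest_eventually_notMem {μ : Measure (ℕ → Bool)} [IsFiniteMeasure μ]
    (hμ : UniformMeasure μ) {V : ℕ → Set (ℕ → Bool)} (hV : UniformlyClopen V)
    (hμV : ∀ j, μ (V j) ≤ (2 : ENNReal)⁻¹ ^ j) :
    ∃ t, SchnorrTest μ t ∧ ∀ ω, (∃ i, ω ∉ EffOpen t i) → ∀ᶠ j in atTop, ω ∉ V j := by
  have hshift : Computable fun p : ℕ × ℕ => p.1 + p.2 + 2 :=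
    Primrec.nat_add.to_comp.comp Primrec.nat_add.to_comp (Computable.const 2)
  have hx : Computable fun p : ℕ × ℕ => Pre (Nat.testBit 0) (p.1 + p.2 + 2) :=
    primrec_Pre_testBit.to_comp.comp (Computable.const 0) hshift
  -- A row of a test enumerates at least one cylinder, so each `V j`, possibly empty, is padded with
  -- a small one.
  have hW : UniformlyClopen fun p : ℕ × ℕ =>
      V (p.1 + p.2 + 2) ∪ Cyl (Pre (Nat.testBit 0) (p.1 + p.2 + 2)) :=
    (hV.comp hshift).union (uniformlyClopen_Cyl hx)
  obtain ⟨t, ht, htW⟩ := exists_schnorrTest_effOpen_eq_iUnion hμ hW hx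
    (fun _ => Set.subset_union_right) fun i j => calc
      _ ≤ μ (V (i + j + 2)) + μ (Cyl (Pre (Nat.testBit 0) (i + j + 2))) := measure_union_le _ _
      _ ≤ (2 : ENNReal)⁻¹ ^ (i + j + 2) + (2 : ENNReal)⁻¹ ^ (i + j + 2) := by
          refine add_le_add (hμV _) ?_
          rw [hμ, length_Pre]
      _ = (2 : ENNReal)⁻¹ ^ (i + j + 1) := by
          rw [pow_succ _ (i + j + 1), ← mul_add, ENNReal.inv_two_add_inv_two, mul_one]
  refine ⟨t, ht, fun ω ⟨i, hi⟩ => eventually_atTop.2 ⟨i + 2, fun j hj hωj => hi ?_⟩⟩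
  rw [htW]
  refine Set.mem_iUnion.2 ⟨j - (i + 2), Or.inl ?_⟩
  convert! hωj using 2
  lia

end SchnorrTests

section BlockConvergence

theorem exists_tendsto_atTop_block {N : ℕ → ℕ} (hN : StrictMono N) :
    ∃ j : ℕ → ℕ, Tendsto j atTop atTop ∧ ∀ᶠ n in atTop, N (j n) ≤ n ∧ n ≤ N (j n + 1) := by
  refine ⟨fun n => Nat.findGreatest (fun j => N j ≤ n) n, Filter.tendsto_atTop.2 fun b => ?_, ?_⟩
  · filter_upwards [eventually_ge_atTop (N b)] with n hn
    exact Nat.le_findGreatest (hN.le_apply.trans hn) hn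
  · filter_upwards [eventually_ge_atTop (N 0)] with n hn
    refine ⟨Nat.findGreatest_spec (P := fun j => N j ≤ n) (Nat.zero_le n) hn, ?_⟩
    by_contra! h
    exact (Nat.lt_succ_self _).not_ge (Nat.le_findGreatest (hN.le_apply.trans h.le) h.le)

theorem exists_tendsto_of_dist_le_on_blocks {X : Type*} [PseudoMetricSpace X] [CompleteSpace X]
    {u : ℕ → X} {N : ℕ → ℕ} (hN : StrictMono N) {b : ℕ → ℝ} (hb : Summable b)
    (hu : ∀ᶠ j in atTop, ∀ n, N j ≤ n → n ≤ N (j + 1) → dist (u n) (u (N j)) ≤ b j) :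
    ∃ L, Tendsto u atTop (nhds L) := by
  have hcauchy : CauchySeq fun j => u (N j) := by
    refine cauchySeq_of_summable_dist (hb.of_norm_bounded_eventually_nat ?_)
    filter_upwards [hu] with j hj
    rw [Real.norm_of_nonneg dist_nonneg, dist_comm]
    exact hj _ (hN (Nat.lt_succ_self j)).le le_rfl
  obtain ⟨L, hL⟩ := cauchySeq_tendsto_of_complete hcauchy
  obtain ⟨j, hj, hblock⟩ := exists_tendsto_atTop_block hN
  refine ⟨L, (hL.comp hj).congr_dist (squeeze_zero' (Eventually.of_forall fun _ => dist_nonneg) ?_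
    (hb.tendsto_atTop_zero.comp hj))⟩
  filter_upwards [hblock, hj.eventually hu] with n hn hun
  rw [dist_comm]
  exact hun n hn.1 hn.2

end BlockConvergence

section EffectiveConvergence

theorem ofReal_inv_two_pow_le {i j : ℕ} (hij : i ≤ j) :
    ENNReal.ofReal ((2⁻¹ ^ j : ℚ) : ℝ) ≤ 2⁻¹ ^ i := by
  rw [Rat.cast_pow, Rat.cast_inv, Rat.cast_ofNat, ENNReal.ofReal_pow (by positivity),
    ENNReal.ofReal_inv_of_pos two_pos, ENNReal.ofReal_ofNat]
  exact pow_le_pow_right_of_le_one' (by simp) hij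

theorem summable_inv_two_pow : Summable fun j : ℕ => ((2⁻¹ ^ j : ℚ) : ℝ) := by
  simpa only [Rat.cast_pow, Rat.cast_inv, Rat.cast_ofNat, one_div] using summable_geometric_two

theorem ComputableRealFnSeq.exists_prefixComputable_approx {f : ℕ → (ℕ → Bool) → ℝ}
    (hf : ComputableRealFnSeq f) {δ : ℕ → ℚ} (hδ : Computable δ) (hδpos : ∀ j, 0 < δ j) :
    ∃ h : ℕ × ℕ → (ℕ → Bool) → ℚ, PrefixComputable h ∧
      ∀ n j ω, |(h (n, j) ω : ℝ) - f n ω| ≤ δ j := by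
  obtain ⟨F, k, hF, hk, hFk⟩ := hf
  have hδsnd : Computable fun p : ℕ × ℕ => δ p.2 := hδ.comp Computable.snd
  have hargs : Computable fun q : (ℕ × ℕ) × List Bool => (q.1.1, q.2, δ q.1.2) :=
    (Computable.fst.comp Computable.fst).pair (Computable.snd.pair (hδsnd.comp Computable.fst))
  have hΦ := hF.comp hargs
  exact ⟨fun p ω => F p.1 (Pre ω (k p.1 (δ p.2))) (δ p.2),
    ⟨fun p => k p.1 (δ p.2), fun p w => F p.1 w (δ p.2), hk.comp Computable.fst hδsnd, hΦ,
      fun _ _ => rfl⟩, fun n j ω => hFk n ω (δ j) (hδpos j)⟩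

theorem EffConvergesAS.exists_computable_strictMono {μ : Measure (ℕ → Bool)}
    {f : ℕ → (ℕ → Bool) → ℝ} {g : (ℕ → Bool) → ℝ} (hconv : EffConvergesAS μ f g)
    {δ : ℕ → ℚ} (hδ : Computable δ) (hδpos : ∀ j, 0 < δ j) :
    ∃ N : ℕ → ℕ, Computable N ∧ StrictMono N ∧
      ∀ j, μ {ω | ∃ n, N j ≤ n ∧ (δ j : ℝ) < |f n ω - g ω|} ≤ ENNReal.ofReal (δ j) := by
  obtain ⟨m, hm, hμm⟩ := hconv
  have hrate : Computable fun i : ℕ => m (δ i) (δ i) + 1 := Computable.succ.comp (hm.comp hδ hδ)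
  refine ⟨fun j => ∑ i ∈ Finset.range (j + 1), (m (δ i) (δ i) + 1),
    computable_sum_range (hrate.comp Computable.snd).to₂ Computable.succ,
    strictMono_nat_of_lt_succ fun j => ?_, fun j => ?_⟩
  · rw [Finset.sum_range_succ _ (j + 1)]
    lia
  · have hle : m (δ j) (δ j) ≤ ∑ i ∈ Finset.range (j + 1), (m (δ i) (δ i) + 1) := by
      rw [Finset.sum_range_succ]
      lia
    refine (measure_mono ?_).trans (hμm (δ j) (δ j) (hδpos j) (hδpos j)).le
    exact fun ω ⟨n, hn, hω⟩ => ⟨n, hle.trans hn, hω⟩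

/-- The points at which, between the times `N j` and `N (j + 1)`, the `j`-th approximations
`h (·, j)` move by more than `r j` away from their value at time `N j`. -/
def oscillationSet (h : ℕ × ℕ → (ℕ → Bool) → ℚ) (N : ℕ → ℕ) (r : ℕ → ℚ) (j : ℕ) :
    Set (ℕ → Bool) :=
  {ω | ∃ n < N (j + 1) + 1, N j ≤ n ∧ r j < |h (n, j) ω - h (N j, j) ω|}

theorem uniformlyClopen_oscillationSet {h : ℕ × ℕ → (ℕ → Bool) → ℚ} (hh : PrefixComputable h)
    {N : ℕ → ℕ} (hN : Computable N) {r : ℕ → ℚ} (hr : Computable r) :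
    UniformlyClopen (oscillationSet h N r) := by
  have hend : Computable fun j => N (j + 1) + 1 :=
    Computable.succ.comp (hN.comp Computable.succ)
  have hstart : Computable fun p : ℕ × ℕ => N p.1 := hN.comp Computable.fst
  have hle : ComputablePred fun q : (ℕ × ℕ) × ℚ × ℚ => N q.1.1 ≤ q.1.2 :=
    computablePred_comp (PrimrecPred.computablePred Primrec.nat_le)
      ((hstart.comp Computable.fst).pair (Computable.snd.comp Computable.fst))
  have hfar : ComputablePred fun q : (ℕ × ℕ) × ℚ × ℚ => r q.1.1 < |q.2.1 - q.2.2| :=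
    computablePred_comp computablePred_rat_lt_abs_sub
      ((hr.comp (Computable.fst.comp Computable.fst)).pair Computable.snd)
  have hpoint := (hh.comp (Computable.snd.pair Computable.fst)).uniformlyClopen_setOf
    (hh.comp (hstart.pair Computable.fst))
    (R := fun p q => N p.1 ≤ p.2 ∧ r p.1 < |q.1 - q.2|) (computablePred_and hle hfar)
  convert hpoint.iUnion_lt hend using 2 with j
  ext ω
  simp only [oscillationSet, Set.mem_iUnion, Set.mem_ofPred_eq, exists_prop]

variable {f : ℕ → (ℕ → Bool) → ℝ} {h : ℕ × ℕ → (ℕ → Bool) → ℚ} {N : ℕ → ℕ} {r : ℕ → ℚ}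

theorem oscillationSet_subset {g : (ℕ → Bool) → ℝ} {j : ℕ} {δ : ℝ}
    (hh : ∀ n ω, |(h (n, j) ω : ℝ) - f n ω| ≤ δ) (hδ : 4 * δ ≤ r j) :
    oscillationSet h N r j ⊆ {ω | ∃ n, N j ≤ n ∧ δ < |f n ω - g ω|} := by
  rintro ω ⟨n, -, hn, hω⟩
  by_contra hdev
  simp only [Set.mem_ofPred_eq, not_exists, not_and, not_lt] at hdev
  have happrox (n : ℕ) (hn : N j ≤ n) : |(h (n, j) ω : ℝ) - g ω| ≤ 2 * δ := by
    linarith [abs_sub_le (h (n, j) ω : ℝ) (f n ω) (g ω), hh n ω, hdev n hn]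
  have hfar : (r j : ℝ) < |(h (n, j) ω : ℝ) - h (N j, j) ω| := by
    rw [← Rat.cast_sub, ← Rat.cast_abs]
    exact Rat.cast_lt.2 hω
  have hclose := abs_sub_le (h (n, j) ω : ℝ) (g ω) (h (N j, j) ω)
  rw [abs_sub_comm (g ω)] at hclose
  linarith [happrox n hn, happrox (N j) le_rfl]

theorem dist_le_of_notMem_oscillationSet {j n : ℕ} {δ : ℝ} {ω : ℕ → Bool}
    (hh : ∀ n, |(h (n, j) ω : ℝ) - f n ω| ≤ δ) (hω : ω ∉ oscillationSet h N r j)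
    (hn : N j ≤ n) (hn' : n ≤ N (j + 1)) : dist (f n ω) (f (N j) ω) ≤ r j + 2 * δ := by
  have hnear : dist (h (n, j) ω : ℝ) (h (N j, j) ω) ≤ r j := by
    rw [Real.dist_eq, ← Rat.cast_sub, ← Rat.cast_abs, Rat.cast_le]
    by_contra! hfar
    exact hω ⟨n, Nat.lt_succ_of_le hn', hn, hfar⟩
  have hdist (n : ℕ) : dist (h (n, j) ω : ℝ) (f n ω) ≤ δ := (Real.dist_eq _ _).trans_le (hh n)
  calc dist (f n ω) (f (N j) ω)
      ≤ dist (f n ω) (h (n, j) ω) + dist (h (n, j) ω : ℝ) (h (N j, j) ω) +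
          dist (h (N j, j) ω : ℝ) (f (N j) ω) := dist_triangle4 _ _ _ _
    _ ≤ δ + r j + δ := add_le_add_three (dist_comm (f n ω) _ ▸ hdist n) hnear (hdist (N j))
    _ = r j + 2 * δ := by ring

theorem exists_tendsto_of_eventually_notMem_oscillationSet (hN : StrictMono N) {δ : ℕ → ℝ}
    {ω : ℕ → Bool} (hh : ∀ n j, |(h (n, j) ω : ℝ) - f n ω| ≤ δ j)
    (hr : Summable fun j => (r j : ℝ)) (hδ : Summable δ)
    (hω : ∀ᶠ j in atTop, ω ∉ oscillationSet h N r j) :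
    ∃ L : ℝ, Tendsto (fun n => f n ω) atTop (nhds L) := by
  refine exists_tendsto_of_dist_le_on_blocks hN (hr.add (hδ.mul_left 2)) ?_
  filter_upwards [hω] with j hj n hn hn'
  exact dist_le_of_notMem_oscillationSet (fun n => hh n j) hj hn hn'

end EffectiveConvergence

/-- if a computable sequence of functions converges effectively almost surely,
then there is a Schnorr test `t` such that `lim f n ω` exists for every `ω` passing `t`;
in particular the limit exists for every Schnorr random sequence. -/
theorem schnorr_test_for_effective_as_convergence
    (μ : Measure (ℕ → Bool)) (hμ : UniformMeasure μ) [IsProbabilityMeasure μ]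
    (f : ℕ → (ℕ → Bool) → ℝ) (g : (ℕ → Bool) → ℝ)
    (hf : ComputableRealFnSeq f) (hconv : EffConvergesAS μ f g) :
    (∃ t : ℕ → ℕ → List Bool, SchnorrTest μ t ∧
      ∀ ω : ℕ → Bool, (∃ n, ω ∉ EffOpen t n) →
        ∃ L : ℝ, Tendsto (fun n => f n ω) atTop (nhds L)) ∧
    ∀ ω : ℕ → Bool, SchnorrRandom μ ω →
      ∃ L : ℝ, Tendsto (fun n => f n ω) atTop (nhds L) := by
  have hr : Computable fun j : ℕ => (2 : ℚ)⁻¹ ^ j := computable_rat_inv_two_pow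
  have hδ : Computable fun j : ℕ => (2 : ℚ)⁻¹ ^ (j + 2) :=
    hr.comp (Computable.succ.comp Computable.succ)
  have hδpos (j : ℕ) : (0 : ℚ) < 2⁻¹ ^ (j + 2) := by positivity
  have hδr (j : ℕ) : 4 * ((2⁻¹ ^ (j + 2) : ℚ) : ℝ) = (2⁻¹ ^ j : ℚ) := by push_cast; ring
  obtain ⟨h, hh, hhf⟩ := hf.exists_prefixComputable_approx hδ hδpos
  obtain ⟨N, hN, hNmono, hμN⟩ := hconv.exists_computable_strictMono hδ hδpos
  have hμosc (j : ℕ) : μ (oscillationSet h N (fun j => 2⁻¹ ^ j) j) ≤ 2⁻¹ ^ j :=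
    calc _ ≤ _ := measure_mono (oscillationSet_subset (fun n ω => hhf n j ω) (hδr j).le)
      _ ≤ _ := hμN j
      _ ≤ 2⁻¹ ^ j := ofReal_inv_two_pow_le (Nat.le_add_right j 2)
  obtain ⟨t, ht, htosc⟩ := exists_schnorrTest_eventually_notMem hμ
    (uniformlyClopen_oscillationSet hh hN hr) hμosc
  have hlim (ω : ℕ → Bool) (hω : ∃ n, ω ∉ EffOpen t n) :
      ∃ L : ℝ, Tendsto (fun n => f n ω) atTop (nhds L) :=
    exists_tendsto_of_eventually_notMem_oscillationSet hNmono (fun n j => hhf n j ω)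
      summable_inv_two_pow ((summable_nat_add_iff 2).2 summable_inv_two_pow) (htosc ω hω)
  exact ⟨⟨t, ht, hlim⟩, fun ω hω => hlim ω (hω t ht)⟩
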